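/- arXiv:2204.08823 — 2 statements merged into one kernel-verified Lean document; each statement's English description precedes it below -/
import Mathlib

section
/- For every real polynomial p of degree at most 5, every x ∈ ℝ and every h ∈ ℝ with h ≠ 0, the full-stencil Hermite derivative formula is exact: p'(x + h/2) = (1/h)·((3/64)p(x-h) - (3/2)p(x) + (93/64)p(x+h)) + (1/64)·(p'(x-h) - 12·p'(x) - 15·p'(x+h)). -/
/-!
Clear denominators by writing `h = 2 * k`. The difference of the two sides is then a linear
functional of `p` with coefficients in `ℤ[k]`, so exactness makes sense over any commutative ring,
and by Taylor expansion at `x` it only has to be checked on `(X - x) ^ n` for `n < 6`. The weights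
are the derivatives at the midpoint of the six quintic Hermite basis polynomials of the stencil
`{x - h, x, x + h}`; equivalently, they solve the six linear equations given by these powers.
-/

open Polynomial

section CommRing

variable {R : Type*} [CommRing R]

theorem linearMap_eq_zero_of_degree_lt {M : Type*} [AddCommMonoid M] [Module R M]
    (f : R[X] →ₗ[R] M) (x : R) {n : ℕ} (hf : ∀ i < n, f ((X - C x) ^ i) = 0)
    {p : R[X]} (hp : p.degree < n) : f p = 0 := by
  rw [← sum_taylor_eq p x, Polynomial.sum, map_sum]
  refine Finset.sum_eq_zero fun i hi ↦ ?_
  have hi_lt : i < n := by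
    have hi_le : (i : WithBot ℕ) ≤ (taylor x p).degree := le_degree_of_mem_supp i hi
    rw [degree_taylor] at hi_le
    exact_mod_cast hi_le.trans_lt hp
  rw [← smul_eq_C_mul, map_smul, hf i hi_lt, smul_zero]

/-- The defect of the full-stencil Hermite formula for the derivative at the midpoint `x + k`, as a
linear functional on polynomials. The grid spacing is `h = 2 * k`, and the formula has been
multiplied by `64 * h`, so that neither `h` nor `2` has to be inverted. -/
noncomputable def hermiteMidpointDefect (x k : R) : R[X] →ₗ[R] R :=
  (64 * (2 * k)) • leval (x + k) ∘ₗ derivative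
    - ((3 : R) • leval (x - 2 * k) - (96 : R) • leval x + (93 : R) • leval (x + 2 * k))
    - (2 * k) • (leval (x - 2 * k) - (12 : R) • leval x - (15 : R) • leval (x + 2 * k))
        ∘ₗ derivative

theorem hermiteMidpointDefect_apply (x k : R) (p : R[X]) :
    hermiteMidpointDefect x k p =
      64 * (2 * k) * p.derivative.eval (x + k)
        - (3 * p.eval (x - 2 * k) - 96 * p.eval x + 93 * p.eval (x + 2 * k))
        - 2 * k * (p.derivative.eval (x - 2 * k) - 12 * p.derivative.eval x
            - 15 * p.derivative.eval (x + 2 * k)) :=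
  rfl

theorem hermiteMidpointDefect_X_sub_C_pow (x k : R) {n : ℕ} (hn : n < 6) :
    hermiteMidpointDefect x k ((X - C x) ^ n) = 0 := by
  simp only [hermiteMidpointDefect_apply, derivative_X_sub_C_pow, eval_mul, eval_pow, eval_sub,
    eval_X, eval_C, sub_self, add_sub_cancel_left, sub_sub_cancel_left]
  interval_cases n <;> push_cast <;> ring

theorem hermiteMidpointDefect_eq_zero_of_degree_lt (x k : R) {p : R[X]} (hp : p.degree < 6) :
    hermiteMidpointDefect x k p = 0 :=
  linearMap_eq_zero_of_degree_lt _ x (fun _ ↦ hermiteMidpointDefect_X_sub_C_pow x k) hp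

end CommRing

theorem hermite_full_stencil_derivative_exact_general {K : Type*} [Field K] (h_two : (2 : K) ≠ 0)
    (p : K[X]) (hp : p.degree ≤ 5) (x h : K) (hh : h ≠ 0) :
    p.derivative.eval (x + h / 2) =
      (1 / h) * ((3/64) * p.eval (x - h) - (3/2) * p.eval x + (93/64) * p.eval (x + h))
        + (1/64) * (p.derivative.eval (x - h) - 12 * p.derivative.eval x
            - 15 * p.derivative.eval (x + h)) := by
  have defect_eq_zero : hermiteMidpointDefect x (h / 2) p = 0 :=
    hermiteMidpointDefect_eq_zero_of_degree_lt x (h / 2) (hp.trans_lt (by norm_num))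
  rw [hermiteMidpointDefect_apply, mul_div_cancel₀ h h_two] at defect_eq_zero
  have h_sixtyFour : (64 : K) = 2 ^ 6 := by norm_num
  rw [h_sixtyFour] at defect_eq_zero ⊢
  generalize p.derivative.eval (x + h / 2) = slope at defect_eq_zero ⊢
  field_simp
  linear_combination defect_eq_zero

theorem hermite_full_stencil_derivative_exact
    (p : Polynomial ℝ) (hp : p.degree ≤ 5) (x h : ℝ) (hh : h ≠ 0) :
    p.derivative.eval (x + h / 2) =
      (1 / h) * ((3/64) * p.eval (x - h) - (3/2) * p.eval x + (93/64) * p.eval (x + h))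
        + (1/64) * (p.derivative.eval (x - h) - 12 * p.derivative.eval x
            - 15 * p.derivative.eval (x + h)) :=
  hermite_full_stencil_derivative_exact_general two_ne_zero p hp x h hh
end

section
/- For every real polynomial p of degree at most 5, every x ∈ ℝ and every h ∈ ℝ with h ≠ 0, defining the sliding cell average A(a) = (1/h)·∫_{x+a-h/2}^{x+a+h/2} p(t) dt, the five-point flux reconstruction is exact: (3/640)·A(-2h) - (29/480)·A(-h) + (1067/960)·A(0) - (29/480)·A(h) + (3/640)·A(2h) = p(x). -/
/-!
After the substitution `t = x + h s` each average `A (k h)` becomes the mean of the polynomial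
`q s = p (x + h s)` over the unit cell centred at `k`, and the claim becomes an identity between
two linear functionals of `q`, the reconstruction and evaluation at `0`. It suffices to compare
them on the monomials `s ^ j` with `j ≤ 5`: for odd `j` both vanish because the stencil is
symmetric, and the three weights solve the linear system given by `j = 0, 2, 4`.
-/

open Polynomial

theorem linearMap_eqOn_degreeLE {R M : Type*} [Semiring R] [AddCommMonoid M] [Module R M]
    {φ ψ : R[X] →ₗ[R] M} {n : ℕ} (h : ∀ j ≤ n, φ (X ^ j) = ψ (X ^ j)) :
    Set.EqOn φ ψ (degreeLE R n) := by
  classical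
  rw [degreeLE_eq_span_X_pow]
  refine LinearMap.eqOn_span fun q hq => ?_
  obtain ⟨j, hj, rfl⟩ := Finset.mem_image.mp (Finset.mem_coe.mp hq)
  exact h j (Nat.lt_succ_iff.mp (Finset.mem_range.mp hj))

theorem comp_linear_mem_degreeLE {R : Type*} [Semiring R] {p : R[X]} {n : ℕ}
    (hp : p ∈ degreeLE R n) (a b : R) : p.comp (C a * X + C b) ∈ degreeLE R n := by
  rw [mem_degreeLE, ← natDegree_le_iff_degree_le] at hp ⊢
  calc (p.comp (C a * X + C b)).natDegree
      ≤ p.natDegree * (C a * X + C b).natDegree := natDegree_comp_le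
    _ ≤ n * 1 := Nat.mul_le_mul hp natDegree_linear_le
    _ = n := mul_one n

/-- The mean of a polynomial over the cell `[a - 1/2, a + 1/2]` of a grid of unit spacing, as a
linear functional. The cell has length one, so the mean is the integral. -/
noncomputable def cellMean (a : ℝ) : ℝ[X] →ₗ[ℝ] ℝ where
  toFun q := ∫ s in (a - 1 / 2)..(a + 1 / 2), q.eval s
  map_add' p q := by
    simpa only [eval_add] using intervalIntegral.integral_add
      (p.continuous.intervalIntegrable _ _) (q.continuous.intervalIntegrable _ _)
  map_smul' c q := by
    simp only [eval_smul, intervalIntegral.integral_smul, RingHom.id_apply]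

theorem cellMean_apply (a : ℝ) (q : ℝ[X]) :
    cellMean a q = ∫ s in (a - 1 / 2)..(a + 1 / 2), q.eval s :=
  rfl

theorem cellMean_X_pow (a : ℝ) (j : ℕ) :
    cellMean a (X ^ j) = ((a + 1 / 2) ^ (j + 1) - (a - 1 / 2) ^ (j + 1)) / (j + 1) := by
  simp only [cellMean_apply, eval_pow, eval_X, integral_pow]

theorem cellMean_neg (a : ℝ) (q : ℝ[X]) : cellMean (-a) q = cellMean a (q.comp (-X)) := by
  simp only [cellMean_apply, eval_comp, eval_neg, eval_X]
  rw [intervalIntegral.integral_comp_neg fun s => q.eval s]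
  congr 1 <;> ring

theorem cellMean_neg_X_pow_of_odd (a : ℝ) {j : ℕ} (hj : Odd j) :
    cellMean (-a) (X ^ j) = -cellMean a (X ^ j) := by
  rw [cellMean_neg, X_pow_comp, hj.neg_pow, map_neg]

theorem cellMean_zero_X_pow_of_odd {j : ℕ} (hj : Odd j) : cellMean 0 (X ^ j) = 0 := by
  have h := cellMean_neg_X_pow_of_odd 0 hj
  rw [neg_zero] at h
  exact self_eq_neg.mp h

theorem inv_smul_integral_cell {E : Type*} [NormedAddCommGroup E] [NormedSpace ℝ E]
    (f : ℝ → E) (x a : ℝ) {h : ℝ} (hh : h ≠ 0) :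
    h⁻¹ • ∫ t in (x + a * h - h / 2)..(x + a * h + h / 2), f t =
      ∫ s in (a - 1 / 2)..(a + 1 / 2), f (x + h * s) := by
  rw [inv_smul_eq_iff₀ hh, intervalIntegral.smul_integral_comp_add_mul]
  congr 1 <;> ring

theorem one_div_mul_integral_cell_eq_cellMean_comp (p : ℝ[X]) (x a : ℝ) {h : ℝ} (hh : h ≠ 0) :
    (1 / h) * ∫ t in (x + a * h - h / 2)..(x + a * h + h / 2), p.eval t =
      cellMean a (p.comp (C h * X + C x)) := by
  rw [one_div, ← smul_eq_mul, inv_smul_integral_cell _ x a hh, cellMean_apply]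
  simp only [eval_comp, eval_add, eval_mul, eval_C, eval_X, add_comm x]

/-- The five-point reconstruction on the unit grid, as a linear functional of the polynomial whose
cell means are the data. Terms are grouped by distance from the centre of the stencil. -/
noncomputable def fluxReconstruction : ℝ[X] →ₗ[ℝ] ℝ :=
  (1067 / 960 : ℝ) • cellMean 0 - (29 / 480 : ℝ) • (cellMean (-1) + cellMean 1) +
    (3 / 640 : ℝ) • (cellMean (-2) + cellMean 2)

theorem fluxReconstruction_apply (q : ℝ[X]) :
    fluxReconstruction q =
      1067 / 960 * cellMean 0 q - 29 / 480 * (cellMean (-1) q + cellMean 1 q) +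
        3 / 640 * (cellMean (-2) q + cellMean 2 q) :=
  rfl

theorem fluxReconstruction_X_pow_of_odd {j : ℕ} (hj : Odd j) : fluxReconstruction (X ^ j) = 0 := by
  rw [fluxReconstruction_apply, cellMean_zero_X_pow_of_odd hj, cellMean_neg_X_pow_of_odd 1 hj,
    cellMean_neg_X_pow_of_odd 2 hj]
  ring

theorem fluxReconstruction_one : fluxReconstruction 1 = 1 := by
  rw [← pow_zero X]
  simp only [fluxReconstruction_apply, cellMean_X_pow]
  norm_num

theorem fluxReconstruction_X_sq : fluxReconstruction (X ^ 2) = 0 := by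
  simp only [fluxReconstruction_apply, cellMean_X_pow]
  norm_num

theorem fluxReconstruction_X_pow_four : fluxReconstruction (X ^ 4) = 0 := by
  simp only [fluxReconstruction_apply, cellMean_X_pow]
  norm_num

theorem fluxReconstruction_X_pow {j : ℕ} (hj : j ≤ 5) :
    fluxReconstruction (X ^ j) = (X ^ j : ℝ[X]).eval 0 := by
  rw [eval_pow, eval_X]
  rcases j.even_or_odd with heven | hodd
  · obtain rfl | rfl | rfl : j = 0 ∨ j = 2 ∨ j = 4 := by grind
    · rw [pow_zero, pow_zero, fluxReconstruction_one]
    · rw [fluxReconstruction_X_sq, zero_pow two_ne_zero]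
    · rw [fluxReconstruction_X_pow_four, zero_pow four_ne_zero]
  · rw [fluxReconstruction_X_pow_of_odd hodd, zero_pow hodd.pos.ne']

theorem fluxReconstruction_eq_eval_zero {q : ℝ[X]} (hq : q ∈ degreeLE ℝ 5) :
    fluxReconstruction q = q.eval 0 :=
  linearMap_eqOn_degreeLE (ψ := leval 0) (n := 5) (fun _ hj => fluxReconstruction_X_pow hj) hq

theorem flux_reconstruction_exact_on_quintics
    (p : Polynomial ℝ) (hp : p.degree ≤ 5) (x h : ℝ) (hh : h ≠ 0) :
    (let A : ℝ → ℝ := fun a => (1 / h) * ∫ t in (x + a - h / 2)..(x + a + h / 2), p.eval t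
     (3/640) * A (-2 * h) - (29/480) * A (-h) + (1067/960) * A 0
       - (29/480) * A h + (3/640) * A (2 * h)) = p.eval x := by
  extract_lets A
  set q : ℝ[X] := p.comp (C h * X + C x) with hq
  have hA (k : ℝ) : A (k * h) = cellMean k q :=
    one_div_mul_integral_cell_eq_cellMean_comp p x k hh
  have hA_neg_one : A (-h) = cellMean (-1) q := by rw [← hA, neg_one_mul]
  have hA_zero : A 0 = cellMean 0 q := by rw [← hA, zero_mul]
  have hA_one : A h = cellMean 1 q := by rw [← hA, one_mul]
  have hq_mem : q ∈ degreeLE ℝ 5 := comp_linear_mem_degreeLE (n := 5) (mem_degreeLE.mpr hp) h x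
  calc 3 / 640 * A (-2 * h) - 29 / 480 * A (-h) + 1067 / 960 * A 0
        - 29 / 480 * A h + 3 / 640 * A (2 * h)
      = fluxReconstruction q := by
        rw [hA, hA_neg_one, hA_zero, hA_one, hA, fluxReconstruction_apply]
        ring
    _ = q.eval 0 := fluxReconstruction_eq_eval_zero hq_mem
    _ = p.eval x := by simp [hq]
end
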